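/- The K-algebra t(v) = T(v)/(a^p, b^p, h^p − h) has dimension 2p^2 − Σ_{i=0}^{n−1} r_i^2 as a K-vector space. -/

import Mathlib

/-!
In `t(v)` the element `h` satisfies `h^p = h`, so it is diagonalisable with eigenvalues in `F_p`, and
Lagrange interpolation yields idempotents `e_j` (`1 ≤ j ≤ p`) with `h e_j = j e_j` and `∑ e_j = 1`.
Left multiplication by `a` and `b` raises and lowers the weight by one, and `ba`, `ab` act on weight
vectors as scalars (values of `v`), so `t(v)` is spanned by the monomials `a^m e_j` and `b^m e_j`.

For `1 ≤ j ≤ p` let `lo < j ≤ hi` be the roots of `v` in `[0, p]` enclosing `j`. Between them `v` does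
not vanish, so `e_j` is a nonzero multiple of `a^k b^k e_j` with `k = j - lo - 1`; as `a^p = 0`, this
gives `a^(p-k) e_j = 0`. Symmetrically `b^(p-(hi-j)) e_j = 0`. The remaining monomials, indexed by the
weights `w` with `hi + 1 - p ≤ w ≤ lo + p`, span `t(v)` (`span_mono`).

They are independent (`linearIndependent_mono`) because `t(v)` acts on an explicit module with basis
`z_(j,w)`, `j, w ∈ ℤ` (`exists_rep`), where the monomial of index `(j, w)` sends `∑_i z_(i,i)` to
`z_(j,w)`. Hence `dim t(v) = ∑_j (2p - (hi_j - lo_j))` (`rank_tv`). The enclosing roots cut `1, …, p`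
into blocks of lengths `r_1, …, r_{n-1}, r_0`, and a block of length `r_i` contributes
`r_i (2p - r_i)`; these add up to `2p² - ∑ r_i²`.
-/



/-!
The algebra `t(v) = T(v)/(a^p, b^p, h^p − h)`, where `T(v)` is Hodges' algebra: the
quotient of the free algebra `K⟨a,b,h⟩` by the two-sided ideal generated by
`ha − ah − a`, `hb − bh + b`, `ba − v(h)`, `ab − v(h−1)`.  We realise `t(v)` as a
`RingQuot` of the free algebra on three generators (`0 ↦ a`, `1 ↦ b`, `2 ↦ h`), imposing
in addition the relations `a^p = 0`, `b^p = 0`, `h^p = h`.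
-/

open Polynomial

noncomputable section

/-- the generator `a` of the free algebra `K⟨a,b,h⟩` -/
def fa (K : Type) [Field K] : FreeAlgebra K (Fin 3) := FreeAlgebra.ι K 0

/-- the generator `b` of the free algebra `K⟨a,b,h⟩` -/
def fb (K : Type) [Field K] : FreeAlgebra K (Fin 3) := FreeAlgebra.ι K 1

/-- the generator `h` of the free algebra `K⟨a,b,h⟩` -/
def fh (K : Type) [Field K] : FreeAlgebra K (Fin 3) := FreeAlgebra.ι K 2

/-- The defining relations of `t(v) = T(v)/(a^p, b^p, h^p − h)`. -/
inductive tvRel (K : Type) [Field K] (v : K[X]) (p : ℕ) :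
    FreeAlgebra K (Fin 3) → FreeAlgebra K (Fin 3) → Prop
  | ha : tvRel K v p (fh K * fa K) (fa K * (fh K + 1))
  | hb : tvRel K v p (fh K * fb K) (fb K * (fh K - 1))
  | ba : tvRel K v p (fb K * fa K) (aeval (fh K) v)
  | ab : tvRel K v p (fa K * fb K) (aeval (fh K - 1) v)
  | ap : tvRel K v p (fa K ^ p) 0
  | bp : tvRel K v p (fb K ^ p) 0
  | hp : tvRel K v p (fh K ^ p) (fh K)

/-- the algebra `t(v) = T(v)/(a^p, b^p, h^p − h)` -/
abbrev tv (K : Type) [Field K] (v : K[X]) (p : ℕ) := RingQuot (tvRel K v p)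

/-- the image of `a` in `t(v)` -/
def ta (K : Type) [Field K] (v : K[X]) (p : ℕ) : tv K v p :=
  RingQuot.mkAlgHom K (tvRel K v p) (fa K)

/-- the image of `b` in `t(v)` -/
def tb (K : Type) [Field K] (v : K[X]) (p : ℕ) : tv K v p :=
  RingQuot.mkAlgHom K (tvRel K v p) (fb K)

/-- the image of `h` in `t(v)` -/
def th (K : Type) [Field K] (v : K[X]) (p : ℕ) : tv K v p :=
  RingQuot.mkAlgHom K (tvRel K v p) (fh K)

/-- The polynomial `v(z) = ∏_{i=0}^{n−1} (z − (r̄_1 + ⋯ + r̄_i))` determined by the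
nonnegative integers `r_1, …, r_{n−1}`. -/
def vr (K : Type) [Field K] (n : ℕ) (r : ℕ → ℕ) : Polynomial K :=
  ∏ i ∈ Finset.range n,
    (Polynomial.X - Polynomial.C ((∑ j ∈ Finset.Ico 1 (i + 1), r j : ℕ) : K))


/-! ### Weight vectors in an algebra satisfying the relations of `T(v)` -/

section Relations

variable {K A : Type} [Field K] [Ring A] [Algebra K A]

lemma aeval_smul_of_eigen {M : Type} [AddCommGroup M] [Module K M] [Module A M]
    [IsScalarTower K A M] (h : A) (x : M) (c : K) (hx : h • x = c • x) (f : K[X]) :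
    aeval h f • x = f.eval c • x := by
  have : SMulCommClass A K M := IsScalarTower.to_smulCommClass'
  induction f using Polynomial.induction_on' with
  | add f g hf hg => simp [add_smul, hf, hg]
  | monomial n k =>
    have hpow : ∀ n : ℕ, h ^ n • x = c ^ n • x := by
      intro n
      induction n with
      | zero => simp
      | succ n ih => rw [pow_succ, mul_smul, hx, smul_comm, ih, smul_smul, pow_succ']
    rw [aeval_monomial, eval_monomial, mul_smul, hpow, algebraMap_smul, smul_smul]

/-- The defining relations of `T(v)` for elements `a`, `b`, `h` of an arbitrary algebra. -/
structure HodgesRel (v : K[X]) (a b h : A) : Prop where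
  ha : h * a = a * (h + 1)
  hb : h * b = b * (h - 1)
  ba : b * a = aeval h v
  ab : a * b = aeval (h - 1) v

namespace HodgesRel

variable {v : K[X]} {a b h : A} (R : HodgesRel v a b h)

include R

lemma h_a {x : A} {c : K} (hx : h * x = c • x) : h * (a * x) = (c + 1) • (a * x) := by
  rw [← mul_assoc, R.ha, mul_assoc, add_mul, hx, one_mul, mul_add, mul_smul_comm, add_smul,
    one_smul]

lemma h_b {x : A} {c : K} (hx : h * x = c • x) : h * (b * x) = (c - 1) • (b * x) := by
  rw [← mul_assoc, R.hb, mul_assoc, sub_mul, hx, one_mul, mul_sub, mul_smul_comm, sub_smul,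
    one_smul]

lemma b_a {x : A} {c : K} (hx : h * x = c • x) : b * (a * x) = v.eval c • x := by
  rw [← mul_assoc, R.ba]
  exact aeval_smul_of_eigen h x c hx v

lemma a_b {x : A} {c : K} (hx : h * x = c • x) : a * (b * x) = v.eval (c - 1) • x := by
  rw [← mul_assoc, R.ab]
  refine aeval_smul_of_eigen (h - 1) x (c - 1) ?_ v
  simp only [smul_eq_mul, sub_mul, hx, one_mul, sub_smul, one_smul]

lemma h_a_pow {x : A} {c : K} (hx : h * x = c • x) (m : ℕ) :
    h * (a ^ m * x) = (c + m) • (a ^ m * x) := by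
  induction m with
  | zero => simpa using hx
  | succ m ih =>
    rw [pow_succ', mul_assoc, R.h_a ih]
    push_cast
    rw [add_assoc]

lemma h_b_pow {x : A} {c : K} (hx : h * x = c • x) (m : ℕ) :
    h * (b ^ m * x) = (c - m) • (b ^ m * x) := by
  induction m with
  | zero => simpa using hx
  | succ m ih =>
    rw [pow_succ', mul_assoc, R.h_b ih]
    push_cast
    rw [sub_sub]

lemma a_pow_b_pow {x : A} {c : K} (hx : h * x = c • x) (k : ℕ)
    (hv : ∀ i < k, v.eval (c - i - 1) ≠ 0) : ∃ s : K, s ≠ 0 ∧ a ^ k * (b ^ k * x) = s • x := by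
  induction k with
  | zero => exact ⟨1, one_ne_zero, by simp⟩
  | succ k ih =>
    obtain ⟨s, hs, e⟩ := ih fun i hi => hv i (by omega)
    refine ⟨v.eval (c - k - 1) * s, mul_ne_zero (hv k (by omega)) hs, ?_⟩
    rw [pow_succ, pow_succ', mul_assoc, mul_assoc, R.a_b (R.h_b_pow hx k), mul_smul_comm, e,
      smul_smul]

lemma b_pow_a_pow {x : A} {c : K} (hx : h * x = c • x) (k : ℕ)
    (hv : ∀ i < k, v.eval (c + i) ≠ 0) : ∃ s : K, s ≠ 0 ∧ b ^ k * (a ^ k * x) = s • x := by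
  induction k with
  | zero => exact ⟨1, one_ne_zero, by simp⟩
  | succ k ih =>
    obtain ⟨s, hs, e⟩ := ih fun i hi => hv i (by omega)
    refine ⟨v.eval (c + k) * s, mul_ne_zero (hv k (by omega)) hs, ?_⟩
    rw [pow_succ, pow_succ', mul_assoc, mul_assoc, R.b_a (R.h_a_pow hx k), mul_smul_comm, e,
      smul_smul]

/-- If `x` can be moved down `k` steps by `b` and back by `a`, then `a ^ p = 0` already forces
`a ^ (p - k)` to kill `x`. -/
lemma a_pow_eq_zero {p : ℕ} (hap : a ^ p = 0) {x : A} {c : K} (hx : h * x = c • x) (m k : ℕ)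
    (hmk : m + k = p) (hv : ∀ i < k, v.eval (c - i - 1) ≠ 0) : a ^ m * x = 0 := by
  obtain ⟨s, hs, e⟩ := R.a_pow_b_pow hx k hv
  have : s • (a ^ m * x) = 0 := by
    rw [← mul_smul_comm, ← e, ← mul_assoc, ← pow_add, hmk, hap, zero_mul]
  exact (smul_eq_zero.mp this).resolve_left hs

lemma b_pow_eq_zero {p : ℕ} (hbp : b ^ p = 0) {x : A} {c : K} (hx : h * x = c • x) (m k : ℕ)
    (hmk : m + k = p) (hv : ∀ i < k, v.eval (c + i) ≠ 0) : b ^ m * x = 0 := by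
  obtain ⟨s, hs, e⟩ := R.b_pow_a_pow hx k hv
  have : s • (b ^ m * x) = 0 := by
    rw [← mul_smul_comm, ← e, ← mul_assoc, ← pow_add, hmk, hbp, zero_mul]
  exact (smul_eq_zero.mp this).resolve_left hs

end HodgesRel

end Relations

/-! ### The relations of `t(v)` -/

section Quotient

variable (K : Type) [Field K] (v : K[X]) (p : ℕ)

lemma tv_hodgesRel : HodgesRel v (ta K v p) (tb K v p) (th K v p) where
  ha := by
    simpa [ta, th] using RingQuot.mkAlgHom_rel K (tvRel.ha (K := K) (v := v) (p := p))
  hb := by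
    simpa [tb, th] using RingQuot.mkAlgHom_rel K (tvRel.hb (K := K) (v := v) (p := p))
  ba := by
    simpa [ta, tb, th, aeval_algHom_apply] using
      RingQuot.mkAlgHom_rel K (tvRel.ba (K := K) (v := v) (p := p))
  ab := by
    have := RingQuot.mkAlgHom_rel K (tvRel.ab (K := K) (v := v) (p := p))
    rw [← aeval_algHom_apply] at this
    simpa [ta, tb, th] using this

lemma ta_pow : ta K v p ^ p = 0 := by
  simpa [ta] using RingQuot.mkAlgHom_rel K (tvRel.ap (K := K) (v := v) (p := p))

lemma tb_pow : tb K v p ^ p = 0 := by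
  simpa [tb] using RingQuot.mkAlgHom_rel K (tvRel.bp (K := K) (v := v) (p := p))

lemma th_pow : th K v p ^ p = th K v p := by
  simpa [th] using RingQuot.mkAlgHom_rel K (tvRel.hp (K := K) (v := v) (p := p))

/-- A subspace stable under left multiplication by the generators and containing `1` is
everything. -/
lemma tv_submodule_eq_top (S : Submodule K (tv K v p)) (h1 : 1 ∈ S)
    (ha : ∀ x ∈ S, ta K v p * x ∈ S) (hb : ∀ x ∈ S, tb K v p * x ∈ S)
    (hh : ∀ x ∈ S, th K v p * x ∈ S) : S = ⊤ := by
  have key : ∀ f : FreeAlgebra K (Fin 3), ∀ x ∈ S, RingQuot.mkAlgHom K (tvRel K v p) f * x ∈ S := by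
    intro f
    induction f using FreeAlgebra.induction with
    | grade0 r =>
      intro x hx
      rw [AlgHom.commutes, ← Algebra.smul_def]
      exact S.smul_mem r hx
    | grade1 i =>
      fin_cases i
      · exact ha
      · exact hb
      · exact hh
    | mul f g hf hg =>
      intro x hx
      rw [map_mul, mul_assoc]
      exact hf _ (hg _ hx)
    | add f g hf hg =>
      intro x hx
      rw [map_add, add_mul]
      exact S.add_mem (hf _ hx) (hg _ hx)
  refine eq_top_iff.mpr fun y _ => ?_
  obtain ⟨f, rfl⟩ := RingQuot.mkAlgHom_surjective K (tvRel K v p) y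
  simpa using key f 1 h1

end Quotient

/-! ### Weight idempotents -/

section Idempotents

variable (K : Type) [Field K] (v : K[X]) (p : ℕ) [CharP K p]

lemma intCast_injOn : Set.InjOn (fun j : ℤ => (j : K)) (Finset.Icc (1 : ℤ) p) := by
  intro i hi j hj hij
  simp only [Finset.coe_Icc, Set.mem_Icc] at hi hj
  have hd : (p : ℤ) ∣ i - j := by
    rw [← CharP.intCast_eq_zero_iff K p]
    push_cast
    exact sub_eq_zero.mpr hij
  have := Int.eq_zero_of_abs_lt_dvd hd (by rw [abs_lt]; omega)
  omega

variable [Fact p.Prime]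

lemma intCast_pow_char (j : ℤ) : (j : K) ^ p = j := by
  have := ZMod.pow_card (p := p) (j : ZMod p)
  have h2 := congrArg (ZMod.castHom (dvd_refl p) K) this
  rwa [map_pow, map_intCast] at h2

lemma nodal_eq : Lagrange.nodal (Finset.Icc (1 : ℤ) p) (fun j : ℤ => (j : K)) = X ^ p - X := by
  classical
  have hp : 1 < p := (Fact.out : p.Prime).one_lt
  symm
  have hmon : (X ^ p - X : K[X]).Monic := by
    apply monic_X_pow_sub
    rw [degree_X]
    exact_mod_cast hp
  have hdeg : (X ^ p - X : K[X]).degree = p := by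
    rw [degree_sub_eq_left_of_degree_lt] <;> simp
    exact_mod_cast hp
  have hcard : (Finset.Icc (1 : ℤ) p).card = p := by simp
  refine Polynomial.eq_of_degree_sub_lt_of_eval_finset_eq
    ((Finset.Icc (1 : ℤ) p).image (fun j : ℤ => (j : K))) ?_ ?_
  · rw [Finset.card_image_of_injOn (intCast_injOn K p), hcard]
    have := degree_sub_lt_left (p := (X ^ p - X : K[X]))
      (q := Lagrange.nodal (Finset.Icc (1 : ℤ) p) (fun j : ℤ => (j : K)))
      (by rw [hdeg, Lagrange.degree_nodal, hcard]) hmon.ne_zero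
      (by rw [hmon.leadingCoeff, (Lagrange.nodal_monic).leadingCoeff])
    rwa [hdeg] at this
  · intro x hx
    obtain ⟨j, hj, rfl⟩ := Finset.mem_image.mp hx
    rw [Lagrange.eval_nodal_at_node hj]
    simp [intCast_pow_char]

/-- The idempotent of `t(v)` projecting onto the eigenspace of `h` for the eigenvalue `j`,
written as the Lagrange basis polynomial at the nodes `1, …, p` evaluated at `h`. -/
def idem (j : ℤ) : tv K v p :=
  aeval (th K v p) (Lagrange.basis (Finset.Icc (1 : ℤ) p) (fun j : ℤ => (j : K)) j)

lemma th_idem (j : ℤ) (hj : j ∈ Finset.Icc (1 : ℤ) p) :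
    th K v p * idem K v p j = (j : K) • idem K v p j := by
  have h0 : aeval (th K v p) ((X - C (j : K)) *
      Lagrange.basis (Finset.Icc (1 : ℤ) p) (fun j : ℤ => (j : K)) j) = 0 := by
    rw [Lagrange.basis_eq_prod_sub_inv_mul_nodal_div hj]
    have : (X - C (j : K)) * (C (Lagrange.nodalWeight (Finset.Icc (1 : ℤ) p)
        (fun j : ℤ => (j : K)) j) * (Lagrange.nodal (Finset.Icc (1 : ℤ) p)
        (fun j : ℤ => (j : K)) / (X - C (j : K)))) = C (Lagrange.nodalWeight (Finset.Icc (1 : ℤ) p)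
        (fun j : ℤ => (j : K)) j) * (X ^ p - X) := by
      rw [mul_left_comm, ← nodal_eq, EuclideanDomain.mul_div_cancel']
      · exact X_sub_C_ne_zero _
      · exact Lagrange.X_sub_C_dvd_nodal (fun j : ℤ => (j : K)) hj
    rw [this]
    simp [th_pow]
  rw [map_mul] at h0
  simp only [map_sub, aeval_X, aeval_C, sub_mul, ← Algebra.smul_def] at h0
  exact sub_eq_zero.mp h0

lemma sum_idem : ∑ j ∈ Finset.Icc (1 : ℤ) p, idem K v p j = 1 := by
  have hp : 0 < p := (Fact.out : p.Prime).pos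
  unfold idem
  rw [← map_sum, Lagrange.sum_basis (intCast_injOn K p) ⟨1, by simp; omega⟩, map_one]

end Idempotents

/-! ### A representation of `t(v)` -/

section Representation

variable (K : Type) [Field K] (v : K[X]) (p : ℕ) (lo hi : ℤ → ℤ)

/-- The coefficient of `a` on the model module: `a z_(j,w) = aCoeff j w • z_(j,w+1)`.
It is `1` above the starting weight `j` and `v(w)` below it, except that it is cut to `0` above `j`
at the class of `lo j` modulo `p`, and below `j` at the class of `hi j`. Both classes consist of
roots of `v`, so the cuts keep `ba = v(h)` and `ab = v(h - 1)`, and they force `a ^ p = b ^ p = 0`. -/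
def aCoeff (j w : ℤ) : K :=
  if j ≤ w then (if (p : ℤ) ∣ w - lo j then 0 else 1)
  else (if (p : ℤ) ∣ w - hi j then 0 else v.eval (w : K))

/-- The coefficient of `b` on the model module: `b z_(j,w+1) = bCoeff j w • z_(j,w)`.
The roles of `1` and `v(w)` are exchanged compared with `aCoeff`; the cuts are the same. -/
def bCoeff (j w : ℤ) : K :=
  if j ≤ w then (if (p : ℤ) ∣ w - lo j then 0 else v.eval (w : K))
  else (if (p : ℤ) ∣ w - hi j then 0 else 1)

/-- The operator `a` on the model module with basis `z_(j,w)`, for `j w : ℤ`. -/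
def opA : Module.End K (((_ : ℤ) × ℤ) →₀ K) :=
  Finsupp.linearCombination K fun x =>
    aCoeff K v p lo hi x.1 x.2 • Finsupp.single ⟨x.1, x.2 + 1⟩ (1 : K)

/-- The operator `b` on the model module. -/
def opB : Module.End K (((_ : ℤ) × ℤ) →₀ K) :=
  Finsupp.linearCombination K fun x =>
    bCoeff K v p lo hi x.1 (x.2 - 1) • Finsupp.single ⟨x.1, x.2 - 1⟩ (1 : K)

/-- The operator `h` on the model module: `z_(j,w)` has weight `w`. -/
def opH : Module.End K (((_ : ℤ) × ℤ) →₀ K) :=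
  Finsupp.linearCombination K fun x => (x.2 : K) • Finsupp.single x (1 : K)

lemma opA_single (j w : ℤ) : opA K v p lo hi (Finsupp.single ⟨j, w⟩ 1) =
    aCoeff K v p lo hi j w • Finsupp.single ⟨j, w + 1⟩ (1 : K) := by
  rw [opA, Finsupp.linearCombination_single, one_smul]

lemma opB_single (j w : ℤ) : opB K v p lo hi (Finsupp.single ⟨j, w⟩ 1) =
    bCoeff K v p lo hi j (w - 1) • Finsupp.single ⟨j, w - 1⟩ (1 : K) := by
  rw [opB, Finsupp.linearCombination_single, one_smul]

lemma opH_single (j w : ℤ) : opH K (Finsupp.single ⟨j, w⟩ 1) =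
    (w : K) • Finsupp.single ⟨j, w⟩ (1 : K) := by
  rw [opH, Finsupp.linearCombination_single, one_smul]

lemma aeval_opH_single (f : K[X]) (j w : ℤ) :
    aeval (opH K) f (Finsupp.single ⟨j, w⟩ 1) =
      f.eval (w : K) • Finsupp.single ⟨j, w⟩ (1 : K) :=
  aeval_smul_of_eigen (A := Module.End K (((_ : ℤ) × ℤ) →₀ K)) (opH K)
    (Finsupp.single (⟨j, w⟩ : (_ : ℤ) × ℤ) (1 : K)) (w : K) (opH_single K j w) f

lemma opA_pow_single (m : ℕ) (j w : ℤ) : (opA K v p lo hi ^ m) (Finsupp.single ⟨j, w⟩ 1) =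
    (∏ i ∈ Finset.range m, aCoeff K v p lo hi j (w + i)) •
      Finsupp.single ⟨j, w + m⟩ (1 : K) := by
  induction m with
  | zero => simp
  | succ m ih =>
    rw [pow_succ', Module.End.mul_apply, ih, map_smul, opA_single, smul_smul,
      Finset.prod_range_succ]
    push_cast
    rw [add_assoc]

lemma opB_pow_single (m : ℕ) (j w : ℤ) : (opB K v p lo hi ^ m) (Finsupp.single ⟨j, w⟩ 1) =
    (∏ i ∈ Finset.range m, bCoeff K v p lo hi j (w - i - 1)) •
      Finsupp.single ⟨j, w - m⟩ (1 : K) := by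
  induction m with
  | zero => simp
  | succ m ih =>
    rw [pow_succ', Module.End.mul_apply, ih, map_smul, opB_single, smul_smul,
      Finset.prod_range_succ]
    push_cast
    rw [sub_sub]

lemma end_ext {f g : Module.End K (((_ : ℤ) × ℤ) →₀ K)}
    (h : ∀ j w : ℤ, f (Finsupp.single ⟨j, w⟩ 1) = g (Finsupp.single ⟨j, w⟩ 1)) : f = g := by
  refine Finsupp.lhom_ext' fun x => LinearMap.ext_ring ?_
  exact h x.1 x.2

variable [CharP K p]

lemma intCast_eq_of_dvd {i j : ℤ} (h : (p : ℤ) ∣ i - j) : (i : K) = j := by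
  rw [← sub_eq_zero, ← Int.cast_sub]
  exact (CharP.intCast_eq_zero_iff K p _).mpr h

variable {K v p lo hi}
variable (hlo : ∀ j, v.eval (lo j : K) = 0) (hhi : ∀ j, v.eval (hi j : K) = 0)

include hlo hhi in
lemma bCoeff_mul_aCoeff (j w : ℤ) :
    aCoeff K v p lo hi j w * bCoeff K v p lo hi j w = v.eval (w : K) := by
  unfold aCoeff bCoeff
  split_ifs with h1 h2 h2
  · rw [intCast_eq_of_dvd K p h2, hlo, mul_zero]
  · rw [one_mul]
  · rw [intCast_eq_of_dvd K p h2, hhi, mul_zero]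
  · rw [mul_one]

include hlo in
lemma aCoeff_eq_zero {j w : ℤ} (h : (p : ℤ) ∣ w - lo j) : aCoeff K v p lo hi j w = 0 := by
  unfold aCoeff
  rw [if_pos h, intCast_eq_of_dvd K p h, hlo]
  simp

include hhi in
lemma bCoeff_eq_zero {j w : ℤ} (h : (p : ℤ) ∣ w - hi j) : bCoeff K v p lo hi j w = 0 := by
  unfold bCoeff
  rw [if_pos h, intCast_eq_of_dvd K p h, hhi]
  simp

omit [CharP K p] in
lemma exists_dvd_add (hp : 0 < p) (x : ℤ) : ∃ i < p, (p : ℤ) ∣ x + i := by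
  have hp' : (0 : ℤ) < p := by exact_mod_cast hp
  have h1 := Int.emod_nonneg (-x) hp'.ne'
  have h2 := Int.emod_lt_of_pos (-x) hp'
  refine ⟨((-x) % p).toNat, by omega, ?_⟩
  rw [Int.toNat_of_nonneg h1, Int.emod_def]
  exact ⟨-(-x / p), by ring⟩

include hlo in
lemma opA_pow_eq_zero (hp : 0 < p) : opA K v p lo hi ^ p = 0 := by
  refine end_ext K fun j w => ?_
  obtain ⟨i, hi', hd⟩ := exists_dvd_add hp (w - lo j)
  rw [opA_pow_single, Finset.prod_eq_zero (Finset.mem_range.mpr hi'), zero_smul]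
  · rfl
  · exact aCoeff_eq_zero hlo (by convert hd using 1; ring)

include hhi in
lemma opB_pow_eq_zero (hp : 0 < p) : opB K v p lo hi ^ p = 0 := by
  refine end_ext K fun j w => ?_
  obtain ⟨i, hi', hd⟩ := exists_dvd_add hp (hi j - w + 1)
  rw [opB_pow_single, Finset.prod_eq_zero (Finset.mem_range.mpr hi'), zero_smul]
  · rfl
  · refine bCoeff_eq_zero hhi ?_
    obtain ⟨q, hq⟩ := hd
    exact ⟨-q, by rw [mul_neg, ← hq]; ring⟩

variable [Fact p.Prime]

include hlo hhi in
/-- The model module is a representation of `t(v)`. -/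
lemma exists_rep : ∃ ρ : tv K v p →ₐ[K] Module.End K (((_ : ℤ) × ℤ) →₀ K),
    ρ (ta K v p) = opA K v p lo hi ∧ ρ (tb K v p) = opB K v p lo hi ∧
      ρ (th K v p) = opH K := by
  have hp : 0 < p := (Fact.out : p.Prime).pos
  let F := FreeAlgebra.lift K ![opA K v p lo hi, opB K v p lo hi, opH K]
  have Fa : F (fa K) = opA K v p lo hi := by simp [F, fa]
  have Fb : F (fb K) = opB K v p lo hi := by simp [F, fb]
  have Fh : F (fh K) = opH K := by simp [F, fh]
  have hF : ∀ ⦃x y⦄, tvRel K v p x y → F x = F y := by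
    intro x y hxy
    cases hxy with
    | ha =>
      simp only [map_mul, map_add, map_one, Fa, Fh]
      refine end_ext K fun j w => ?_
      simp only [Module.End.mul_apply, LinearMap.add_apply, Module.End.one_apply, opA_single,
        opH_single, map_smul, map_add, smul_smul]
      rw [← add_smul]
      congr 1
      push_cast
      ring
    | hb =>
      simp only [map_mul, map_sub, map_one, Fb, Fh]
      refine end_ext K fun j w => ?_
      simp only [Module.End.mul_apply, LinearMap.sub_apply, Module.End.one_apply, opB_single,
        opH_single, map_smul, map_sub, smul_smul]
      rw [← sub_smul]
      congr 1
      push_cast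
      ring
    | ba =>
      rw [← aeval_algHom_apply, map_mul, Fa, Fb, Fh]
      refine end_ext K fun j w => ?_
      rw [aeval_opH_single, Module.End.mul_apply, opA_single, map_smul, opB_single, smul_smul,
        add_sub_cancel_right, bCoeff_mul_aCoeff hlo hhi]
    | ab =>
      rw [← aeval_algHom_apply, map_mul, map_sub, map_one, Fa, Fb, Fh]
      refine end_ext K fun j w => ?_
      have := aeval_smul_of_eigen (opH K - 1)
        (Finsupp.single (⟨j, w⟩ : (_ : ℤ) × ℤ) (1 : K)) ((w - 1 : ℤ) : K)
        (by
          rw [Module.End.smul_def, LinearMap.sub_apply, opH_single, Module.End.one_apply]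
          push_cast
          rw [sub_smul, one_smul]) v
      rw [Module.End.smul_def] at this
      rw [this, Module.End.mul_apply, opB_single, map_smul, opA_single, smul_smul,
        sub_add_cancel, mul_comm, bCoeff_mul_aCoeff hlo hhi]
    | ap => rw [map_pow, map_zero, Fa, opA_pow_eq_zero hlo hp]
    | bp => rw [map_pow, map_zero, Fb, opB_pow_eq_zero hhi hp]
    | hp =>
      rw [map_pow, Fh]
      refine end_ext K fun j w => ?_
      have := aeval_opH_single K (X ^ p) j w
      simpa [intCast_pow_char, opH_single] using this
  refine ⟨RingQuot.liftAlgHom K ⟨F, hF⟩, ?_, ?_, ?_⟩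
  · rw [ta, RingQuot.liftAlgHom_mkAlgHom_apply, Fa]
  · rw [tb, RingQuot.liftAlgHom_mkAlgHom_apply, Fb]
  · rw [th, RingQuot.liftAlgHom_mkAlgHom_apply, Fh]

end Representation

/-! ### A monomial basis of `t(v)` -/

section Dimension

variable (K : Type) [Field K] (v : K[X]) (p : ℕ)

/-- The monomial `a ^ (w - j) e_j` if `j ≤ w`, and `b ^ (j - w) e_j` if `w ≤ j`; it maps the
weight `j` to the weight `w`. -/
def mono (j w : ℤ) : tv K v p :=
  ta K v p ^ (w - j).toNat * (tb K v p ^ (j - w).toNat * idem K v p j)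

/-- The pairs `(j, w)` for which `mono j w` belongs to the basis of `t(v)`. Here `lo j < j ≤ hi j`
stand for the roots of `v` in `[0, p]` enclosing `j`. -/
def monoIdx (lo hi : ℤ → ℤ) : Finset ((_ : ℤ) × ℤ) :=
  (Finset.Icc (1 : ℤ) p).sigma fun j => Finset.Icc (hi j + 1 - p) (lo j + p)

variable {lo hi : ℤ → ℤ}

lemma mono_up {j w : ℤ} (h : j ≤ w) :
    mono K v p j w = ta K v p ^ (w - j).toNat * idem K v p j := by
  rw [mono, show (j - w).toNat = 0 by omega, pow_zero, one_mul]

lemma mono_down {j w : ℤ} (h : w ≤ j) :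
    mono K v p j w = tb K v p ^ (j - w).toNat * idem K v p j := by
  rw [mono, show (w - j).toNat = 0 by omega, pow_zero, one_mul]

lemma ta_mono_up {j w : ℤ} (h : j ≤ w) :
    ta K v p * mono K v p j w = mono K v p j (w + 1) := by
  rw [mono_up K v p h, mono_up K v p (by omega), ← mul_assoc, ← pow_succ']
  congr 2
  omega

lemma tb_mono_down {j w : ℤ} (h : w ≤ j) :
    tb K v p * mono K v p j w = mono K v p j (w - 1) := by
  rw [mono_down K v p h, mono_down K v p (by omega), ← mul_assoc, ← pow_succ']
  congr 2
  omega

variable [Fact p.Prime] [CharP K p]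

lemma th_mono {j : ℤ} (hj : j ∈ Finset.Icc (1 : ℤ) p) (w : ℤ) :
    th K v p * mono K v p j w = (w : K) • mono K v p j w := by
  have R := tv_hodgesRel K v p
  have e := th_idem K v p j hj
  rcases le_total j w with h | h
  · rw [mono_up K v p h, R.h_a_pow e]
    congr 1
    rw [← Int.cast_natCast, Int.toNat_of_nonneg (by omega)]
    push_cast
    ring
  · rw [mono_down K v p h, R.h_b_pow e]
    congr 1
    rw [← Int.cast_natCast, Int.toNat_of_nonneg (by omega)]
    push_cast
    ring

lemma ta_mono_down {j : ℤ} (hj : j ∈ Finset.Icc (1 : ℤ) p) {w : ℤ} (h : w < j) :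
    ta K v p * mono K v p j w = v.eval (w : K) • mono K v p j (w + 1) := by
  have := (tv_hodgesRel K v p).a_b (th_mono K v p hj (w + 1))
  rw [tb_mono_down K v p (by omega)] at this
  simpa using this

lemma tb_mono_up {j : ℤ} (hj : j ∈ Finset.Icc (1 : ℤ) p) {w : ℤ} (h : j < w) :
    tb K v p * mono K v p j w = v.eval ((w - 1 : ℤ) : K) • mono K v p j (w - 1) := by
  have := (tv_hodgesRel K v p).b_a (th_mono K v p hj (w - 1))
  rw [ta_mono_up K v p (by omega)] at this
  simpa using this

variable (hlt : ∀ j ∈ Finset.Icc (1 : ℤ) p, 0 ≤ lo j ∧ lo j < j ∧ j ≤ hi j ∧ hi j ≤ p)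
  (hlo : ∀ j, v.eval (lo j : K) = 0) (hhi : ∀ j, v.eval (hi j : K) = 0)
  (hne : ∀ j ∈ Finset.Icc (1 : ℤ) p, ∀ w, lo j < w → w < hi j → v.eval (w : K) ≠ 0)

include hlt hne in
/-- From the weight `j` one can descend to `lo j + 1` and return, as `v` has no root in between;
hence ascending from `j` to `lo j + 1 + p` is the same up to a scalar as applying `a ^ p`. -/
lemma mono_top {j : ℤ} (hj : j ∈ Finset.Icc (1 : ℤ) p) : mono K v p j (lo j + p + 1) = 0 := by
  obtain ⟨h0, h1, h2, h3⟩ := hlt j hj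
  rw [Finset.mem_Icc] at hj
  rw [mono_up K v p (by omega)]
  refine (tv_hodgesRel K v p).a_pow_eq_zero (ta_pow K v p) (th_idem K v p j (by simpa using hj)) _
    (j - lo j - 1).toNat (by omega) fun i hi' => ?_
  have := hne j (by simpa using hj) (j - i - 1) (by omega) (by omega)
  simpa using this

include hlt hne in
lemma mono_bot {j : ℤ} (hj : j ∈ Finset.Icc (1 : ℤ) p) : mono K v p j (hi j - p) = 0 := by
  obtain ⟨h0, h1, h2, h3⟩ := hlt j hj
  rw [Finset.mem_Icc] at hj
  rw [mono_down K v p (by omega)]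
  refine (tv_hodgesRel K v p).b_pow_eq_zero (tb_pow K v p) (th_idem K v p j (by simpa using hj)) _
    (hi j - j).toNat (by omega) fun i hi' => ?_
  have := hne j (by simpa using hj) (j + i) (by omega) (by omega)
  simpa using this

include hlt hne in
lemma span_mono :
    Submodule.span K (Set.range fun x : monoIdx p lo hi => mono K v p x.1.1 x.1.2) = ⊤ := by
  set S := Submodule.span K (Set.range fun x : monoIdx p lo hi => mono K v p x.1.1 x.1.2) with hS
  -- One step beyond either end of the index range the monomials vanish, hence still lie in `S`.
  have mem : ∀ j ∈ Finset.Icc (1 : ℤ) p, ∀ w, hi j - p ≤ w → w ≤ lo j + p + 1 →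
      mono K v p j w ∈ S := by
    intro j hj w h1 h2
    rcases h1.eq_or_lt with rfl | h1
    · rw [mono_bot K v p hlt hne hj]
      exact S.zero_mem
    rcases h2.eq_or_lt with rfl | h2
    · rw [mono_top K v p hlt hne hj]
      exact S.zero_mem
    refine Submodule.subset_span ⟨⟨⟨j, w⟩, ?_⟩, rfl⟩
    rw [monoIdx, Finset.mem_sigma]
    refine ⟨hj, ?_⟩
    simp only [Finset.mem_Icc]
    omega
  have stable : ∀ t : tv K v p, (∀ j ∈ Finset.Icc (1 : ℤ) p, ∀ w, hi j + 1 - p ≤ w →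
      w ≤ lo j + p → t * mono K v p j w ∈ S) → ∀ x ∈ S, t * x ∈ S := by
    intro t ht
    suffices S ≤ S.comap (LinearMap.mulLeft K t) from this
    nth_rewrite 1 [hS]
    rw [Submodule.span_le]
    rintro _ ⟨⟨⟨j, w⟩, hx⟩, rfl⟩
    rw [monoIdx, Finset.mem_sigma] at hx
    obtain ⟨hj, hw⟩ := hx
    simp only [Finset.mem_Icc] at hw
    exact ht j hj w hw.1 hw.2
  refine tv_submodule_eq_top K v p S ?_ (stable _ ?_) (stable _ ?_) (stable _ ?_)
  · rw [← sum_idem K v p]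
    refine S.sum_mem fun j hj => ?_
    have h := hlt j hj
    have := mem j hj j
    rw [mono_up K v p le_rfl] at this
    rw [Finset.mem_Icc] at hj
    simpa using this (by omega) (by omega)
  · intro j hj w h1 h2
    rcases le_or_gt j w with h | h
    · rw [ta_mono_up K v p h]
      exact mem j hj _ (by omega) (by omega)
    · rw [ta_mono_down K v p hj h]
      exact S.smul_mem _ (mem j hj _ (by omega) (by omega))
  · intro j hj w h1 h2
    rcases le_or_gt w j with h | h
    · rw [tb_mono_down K v p h]
      exact mem j hj _ (by omega) (by omega)
    · rw [tb_mono_up K v p hj h]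
      exact S.smul_mem _ (mem j hj _ (by omega) (by omega))
  · intro j hj w h1 h2
    rw [th_mono K v p hj]
    exact S.smul_mem _ (mem j hj _ (by omega) (by omega))

include hlt hlo hhi in
lemma linearIndependent_mono :
    LinearIndependent K fun x : monoIdx p lo hi => mono K v p x.1.1 x.1.2 := by
  obtain ⟨ρ, ρa, ρb, ρh⟩ := exists_rep (p := p) hlo hhi
  -- `φ x = ρ(x) ∑_i z_(i,i)` carries `mono j w` to the basis vector `z_(j,w)`.
  let z : ((_ : ℤ) × ℤ) →₀ K := ∑ i ∈ Finset.Icc (1 : ℤ) p, Finsupp.single ⟨i, i⟩ 1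
  let φ : tv K v p →ₗ[K] (((_ : ℤ) × ℤ) →₀ K) :=
    (LinearMap.applyₗ z : Module.End K (((_ : ℤ) × ℤ) →₀ K) →ₗ[K] _) ∘ₗ ρ.toLinearMap
  have hφ : ∀ x, φ x = ρ x z := fun x => rfl
  have hidem : ∀ j ∈ Finset.Icc (1 : ℤ) p,
      ρ (idem K v p j) z = Finsupp.single ⟨j, j⟩ 1 := by
    intro j hj
    rw [idem, ← aeval_algHom_apply, ρh, map_sum, Finset.sum_eq_single_of_mem j hj]
    · rw [aeval_opH_single, Lagrange.eval_basis_self (v := fun j : ℤ => (j : K)) (intCast_injOn K p) hj,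
        one_smul]
    · intro i hi' hij
      rw [aeval_opH_single, Lagrange.eval_basis_of_ne (v := fun j : ℤ => (j : K)) hij.symm hi', zero_smul]
  have key : ∀ x : monoIdx p lo hi,
      φ (mono K v p x.1.1 x.1.2) = Finsupp.single x.1 1 := by
    rintro ⟨⟨j, w⟩, hx⟩
    rw [monoIdx, Finset.mem_sigma] at hx
    obtain ⟨hj, hw⟩ := hx
    obtain ⟨h0, h1, h2, h3⟩ := hlt j hj
    have hj' := Finset.mem_Icc.mp hj
    simp only [Finset.mem_Icc] at hw
    simp only [hφ]
    rcases le_total j w with h | h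
    · rw [mono_up K v p h, map_mul, map_pow, ρa, Module.End.mul_apply, hidem j hj,
        opA_pow_single, Finset.prod_eq_one, one_smul, Int.toNat_of_nonneg (by omega),
        add_sub_cancel]
      intro i hi'
      rw [Finset.mem_range] at hi'
      rw [aCoeff, if_pos (by omega), if_neg]
      -- `j + i` lies strictly between `lo j` and `lo j + p`, so it is not congruent to `lo j`
      intro hd
      have := Int.le_of_dvd (by omega) hd
      omega
    · rw [mono_down K v p h, map_mul, map_pow, ρb, Module.End.mul_apply, hidem j hj,
        opB_pow_single, Finset.prod_eq_one, one_smul, Int.toNat_of_nonneg (by omega),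
        sub_sub_cancel]
      intro i hi'
      rw [Finset.mem_range] at hi'
      rw [bCoeff, if_neg (by omega), if_neg]
      intro hd
      rw [← dvd_neg] at hd
      have := Int.le_of_dvd (by omega) hd
      omega
  refine LinearIndependent.of_comp φ ?_
  have : φ ∘ (fun x : monoIdx p lo hi => mono K v p x.1.1 x.1.2) =
      (fun x => Finsupp.single x (1 : K)) ∘ (Subtype.val : monoIdx p lo hi → _) := funext key
  rw [this]
  exact (Finsupp.linearIndependent_single_one K _).comp _ Subtype.val_injective

include hlt hlo hhi hne in
lemma rank_tv : Module.rank K (tv K v p) =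
    ((∑ j ∈ Finset.Icc (1 : ℤ) p, (2 * p - (hi j - lo j)).toNat : ℕ) : Cardinal) := by
  let B := Module.Basis.mk (linearIndependent_mono K v p hlt hlo hhi)
    (span_mono K v p hlt hne).ge
  rw [rank_eq_card_basis B, Fintype.card_coe, monoIdx, Finset.card_sigma]
  congr 1
  refine Finset.sum_congr rfl fun j _ => ?_
  rw [Int.card_Icc]
  congr 1
  ring

end Dimension

/-! ### Roots of `v` and the blocks between them -/

section Blocks

variable (n : ℕ) (r : ℕ → ℕ)

/-- The block lengths in cyclic order: `r_1, …, r_{n-1}, r_0`. -/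
def blk (i : ℕ) : ℕ := if i + 1 < n then r (i + 1) else r 0

/-- The end points of the blocks, `psum i = r_1 + ⋯ + r_i` for `i < n`; under the hypotheses on `r`,
`psum n = p`. -/
def psum (k : ℕ) : ℕ := ∑ i ∈ Finset.range k, blk n r i

lemma psum_succ (k : ℕ) : psum n r (k + 1) = psum n r k + blk n r k :=
  Finset.sum_range_succ _ _

lemma psum_mono : Monotone (psum n r) :=
  monotone_nat_of_le_succ fun k => by rw [psum_succ]; omega

lemma psum_eq {i : ℕ} (hi : i < n) : psum n r i = ∑ j ∈ Finset.Ico 1 (i + 1), r j := by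
  rw [Finset.sum_Ico_eq_sum_range, psum]
  refine Finset.sum_congr rfl fun k hk => ?_
  rw [Finset.mem_range] at hk
  rw [blk, if_pos (by omega), add_comm]

lemma sum_blk (hn : 0 < n) (f : ℕ → ℕ) :
    ∑ i ∈ Finset.range n, f (blk n r i) = ∑ i ∈ Finset.range n, f (r i) := by
  obtain ⟨m, rfl⟩ : ∃ m, n = m + 1 := ⟨n - 1, by omega⟩
  rw [Finset.sum_range_succ, Finset.sum_range_succ']
  congr 1
  · refine Finset.sum_congr rfl fun k hk => ?_
    rw [Finset.mem_range] at hk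
    rw [blk, if_pos (by omega)]
  · rw [blk, if_neg (by omega)]

lemma psum_n {p : ℕ} (hn : 0 < n) (hrsum : ∑ j ∈ Finset.Ico 1 n, r j ≤ p)
    (hr0 : r 0 = p - ∑ j ∈ Finset.Ico 1 n, r j) : psum n r n = p := by
  obtain ⟨m, rfl⟩ : ∃ m, n = m + 1 := ⟨n - 1, by omega⟩
  rw [psum_succ, psum_eq _ _ (by omega), blk, if_neg (by omega)]
  omega

lemma exists_block (k : ℕ) (j : ℤ) (h0 : 0 < j) (hj : j ≤ psum n r k) :
    ∃ i < k, (psum n r i : ℤ) < j ∧ j ≤ psum n r (i + 1) := by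
  induction k with
  | zero => simp [psum] at hj; omega
  | succ k ih =>
    rcases le_or_gt j (psum n r k) with h | h
    · obtain ⟨i, hi, h'⟩ := ih h
      exact ⟨i, by omega, h'⟩
    · exact ⟨k, by omega, h, hj⟩

/-- Summing over `1, …, psum k` block by block. -/
lemma sum_blocks (k : ℕ) (f : ℤ → ℕ) (g : ℕ → ℕ)
    (hf : ∀ i < k, ∀ j : ℤ, psum n r i < j → j ≤ psum n r (i + 1) → f j = g i) :
    ∑ j ∈ Finset.Icc (1 : ℤ) (psum n r k), f j = ∑ i ∈ Finset.range k, blk n r i * g i := by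
  induction k with
  | zero => simp [psum]
  | succ k ih =>
    have hle : (psum n r k : ℤ) ≤ psum n r (k + 1) := by
      exact_mod_cast psum_mono n r (Nat.le_succ k)
    have hU : Finset.Icc (1 : ℤ) (psum n r (k + 1)) =
        Finset.Icc (1 : ℤ) (psum n r k) ∪ Finset.Ioc (psum n r k : ℤ) (psum n r (k + 1)) := by
      ext x
      simp only [Finset.mem_Icc, Finset.mem_Ioc, Finset.mem_union]
      omega
    have hD : Disjoint (Finset.Icc (1 : ℤ) (psum n r k))
        (Finset.Ioc (psum n r k : ℤ) (psum n r (k + 1))) := by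
      rw [Finset.disjoint_left]
      intro x
      simp only [Finset.mem_Icc, Finset.mem_Ioc]
      omega
    rw [hU, Finset.sum_union hD, ih fun i hi => hf i (by omega), Finset.sum_range_succ]
    congr 1
    rw [Finset.sum_congr rfl (g := fun _ => g k), Finset.sum_const, Int.card_Ioc, smul_eq_mul,
      psum_succ]
    · congr 1
      omega
    · intro j hj
      rw [Finset.mem_Ioc] at hj
      exact hf k (by omega) j hj.1 hj.2

variable (K : Type) [Field K]

lemma eval_vr (x : K) :
    (vr K n r).eval x = ∏ i ∈ Finset.range n, (x - (psum n r i : K)) := by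
  rw [vr, eval_prod]
  refine Finset.prod_congr rfl fun i hi => ?_
  rw [psum_eq n r (Finset.mem_range.mp hi), eval_sub, eval_X, eval_C]

lemma eval_vr_psum {p : ℕ} [CharP K p] (hn : 0 < n) (hS : psum n r n = p) {i : ℕ} (hi : i ≤ n) :
    (vr K n r).eval (((psum n r i : ℕ) : ℤ) : K) = 0 := by
  rw [eval_vr]
  rcases hi.lt_or_eq with h | rfl
  · exact Finset.prod_eq_zero (Finset.mem_range.mpr h) (by simp)
  · -- the last end point `p` is congruent to the root `psum 0 = 0`
    refine Finset.prod_eq_zero (Finset.mem_range.mpr hn) ?_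
    rw [hS]
    simp [psum]

lemma eval_vr_ne_zero {p : ℕ} [CharP K p] (hS : psum n r n = p) {i : ℕ} (hi : i < n) {w : ℤ}
    (h1 : (psum n r i : ℤ) < w) (h2 : w < psum n r (i + 1)) :
    (vr K n r).eval (w : K) ≠ 0 := by
  rw [eval_vr, Finset.prod_ne_zero_iff]
  intro k hk h0
  rw [Finset.mem_range] at hk
  have hd : (p : ℤ) ∣ w - psum n r k := by
    rw [← CharP.intCast_eq_zero_iff K p]
    simpa using h0
  have hkp := psum_mono n r hk.le
  have hip := psum_mono n r (show i + 1 ≤ n from hi)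
  have := Int.eq_zero_of_abs_lt_dvd hd (by rw [abs_lt]; omega)
  rcases le_or_gt k i with h | h
  · have := psum_mono n r h
    omega
  · have := psum_mono n r (show i + 1 ≤ k from h)
    omega

end Blocks
/-!
STATEMENT 8: With `r_0 = p − (r_1 + ⋯ + r_{n−1})` and
`v(z) = ∏_{i=0}^{n−1} (z − (r̄_1 + ⋯ + r̄_i))`, the `K`-algebra
`t(v) = T(v)/(a^p, b^p, h^p − h)` has dimension `2p² − Σ_{i=0}^{n−1} r_i²` as a
`K`-vector space.
-/

theorem statement_8 (K : Type) [Field K] (p n : ℕ) [Fact p.Prime] [CharP K p]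
    [IsAlgClosed K] (hn : 0 < n) (hpn : Nat.Coprime p n)
    (r : ℕ → ℕ) (hrsum : ∑ j ∈ Finset.Ico 1 n, r j ≤ p)
    (hr0 : r 0 = p - ∑ j ∈ Finset.Ico 1 n, r j) :
    Module.rank K (tv K (vr K n r) p) =
      ((2 * p ^ 2 - ∑ i ∈ Finset.range n, r i ^ 2 : ℕ) : Cardinal) := by
  have hS := psum_n n r hn hrsum hr0
  -- `idx j` is the block containing `j`, for `1 ≤ j ≤ p`; outside this range it is irrelevant.
  have hidx : ∀ j : ℤ, ∃ i < n, j ∈ Finset.Icc (1 : ℤ) p →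
      (psum n r i : ℤ) < j ∧ j ≤ psum n r (i + 1) := by
    intro j
    by_cases hj : j ∈ Finset.Icc (1 : ℤ) p
    · have hj' := Finset.mem_Icc.mp hj
      obtain ⟨i, hi, h⟩ := exists_block n r n j (by omega) (by omega)
      exact ⟨i, hi, fun _ => h⟩
    · exact ⟨0, hn, fun h => absurd h hj⟩
  choose idx hlt hidx using hidx
  rw [rank_tv K (vr K n r) p (lo := fun j => psum n r (idx j))
    (hi := fun j => psum n r (idx j + 1))]
  · congr 1
    have hblk : ∀ i < n, blk n r i ≤ p := fun i hi => by
      have := psum_mono n r (show i + 1 ≤ n from hi)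
      rw [psum_succ] at this
      omega
    have hsum := sum_blocks n r n
      (fun j => (2 * p - ((psum n r (idx j + 1) : ℤ) - psum n r (idx j))).toNat)
      (fun i => 2 * p - blk n r i) (by
        intro i hi j h1 h2
        have hj : j ∈ Finset.Icc (1 : ℤ) p := by
          have := psum_mono n r (show i + 1 ≤ n from hi)
          rw [Finset.mem_Icc]
          omega
        obtain ⟨h3, h4⟩ := hidx j hj
        -- the block containing `j` is unique
        have : idx j = i := by
          by_contra hne
          rcases Nat.lt_or_gt_of_ne hne with h | h
          · have := psum_mono n r (show idx j + 1 ≤ i from h)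
            omega
          · have := psum_mono n r (show i + 1 ≤ idx j from h)
            omega
        simp only [this, psum_succ]
        have := hblk i hi
        push_cast
        omega)
    rw [hS] at hsum
    rw [hsum, ← sum_blk n r hn (fun x => x ^ 2)]
    have htot : ∑ i ∈ Finset.range n, blk n r i = p := hS
    refine (Nat.sub_eq_of_eq_add ?_).symm
    rw [← Finset.sum_add_distrib, pow_two, ← mul_assoc]
    nth_rewrite 2 [← htot]
    rw [Finset.mul_sum]
    refine Finset.sum_congr rfl fun i hi => ?_
    have := hblk i (Finset.mem_range.mp hi)
    obtain ⟨d, hd⟩ := Nat.exists_eq_add_of_le (show blk n r i ≤ 2 * p by omega)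
    rw [hd, Nat.add_sub_cancel_left]
    ring
  · intro j hj
    have := hidx j hj
    have := psum_mono n r (show idx j + 1 ≤ n from hlt j)
    omega
  · exact fun j => eval_vr_psum n r K hn hS (hlt j).le
  · exact fun j => eval_vr_psum n r K hn hS (hlt j)
  · intro j _ w h1 h2
    exact eval_vr_ne_zero n r K hS (hlt j) h1 h2
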